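/- arXiv:math/0401163 — 2 statements merged into one kernel-verified Lean document; each statement's English description precedes it below -/
import Mathlib

section
/- Fix λ, μ ∈ ℚ. Let A, B, C be square rational matrices of sizes p×p, q×q, s×s respectively, with p+q and q+s even, and suppose det(λB + μBᵀ) ≠ 0. If A ⊞ (−B) is rationally null-cobordant and B ⊞ (−C) is rationally null-cobordant, then A ⊞ (−C) is rationally null-cobordant. (This is the transitivity underlying the fact that rational cobordism classes of square rational matrices A with det(λA + μAᵀ) ≠ 0 form an abelian group under block sum.) -/
open Matrix

/-- A square matrix over a commutative ring is *null-cobordant* if its size is even,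
say `n = 2 * r`, and it is congruent, via a matrix `P` with unit determinant, to a
block matrix whose upper-left `r × r` block is zero. -/
def Matrix.IsNullCobordant {R : Type*} [CommRing R] {n : ℕ}
    (A : Matrix (Fin n) (Fin n) R) : Prop :=
  ∃ r : ℕ, n = 2 * r ∧ ∃ P : Matrix (Fin n) (Fin n) R, IsUnit P.det ∧
    ∀ i j : Fin n, (i : ℕ) < r → (j : ℕ) < r → (Pᵀ * A * P) i j = 0

/-- The block sum `A ⊞ B` of square matrices: the block-diagonal matrix `[[A,0],[0,B]]`. -/
def Matrix.blockSum {R : Type*} [CommRing R] {p q : ℕ}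
    (A : Matrix (Fin p) (Fin p) R) (B : Matrix (Fin q) (Fin q) R) :
    Matrix (Fin (p + q)) (Fin (p + q)) R :=
  Matrix.reindex finSumFinEquiv finSumFinEquiv (Matrix.fromBlocks A 0 0 B)

/-! A half-dimensional isotropic subspace for `A ⊞ (−B)` is a linear relation `H ⊆ K^p × K^q` that
carries the form of `A` to that of `B`. Transitivity composes the relations `H` and `L`; the form
is visibly carried along, and only the dimension of `L ∘ H` needs an argument. It falls short of
`dim H + dim L` by `dim X + dim N`, where `X` (`relSpan`) is the span of the middle components of
`H` and `L` and `N` (`relKer`) consists of the `v` with `(0, v) ∈ H` and `(v, 0) ∈ L`. Since `N` is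
both left and right orthogonal to `X` for `B`, it is orthogonal to `X` for the nondegenerate form
`λB + μBᵀ`, whence `dim X + dim N ≤ q` and `dim (L ∘ H) ≥ (p + q) / 2 + (q + s) / 2 - q`. -/

open Module LinearMap
open LinearMap (BilinForm)

section LinearRelation

variable {R U V W : Type*} [Ring R] [AddCommGroup U] [Module R U] [AddCommGroup V] [Module R V]
  [AddCommGroup W] [Module R W]

/-- The composition of linear relations, with the relation `H` from `U` to `V` applied first. -/
def relComp (H : Submodule R (U × V)) (L : Submodule R (V × W)) : Submodule R (U × W) where
  carrier := {x | ∃ v, (x.1, v) ∈ H ∧ (v, x.2) ∈ L}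
  zero_mem' := ⟨0, H.zero_mem, L.zero_mem⟩
  add_mem' := fun ⟨v, hH, hL⟩ ⟨v', hH', hL'⟩ => ⟨v + v', H.add_mem hH hH', L.add_mem hL hL'⟩
  smul_mem' := fun c _ ⟨v, hH, hL⟩ => ⟨c • v, H.smul_mem c hH, L.smul_mem c hL⟩

/-- The subspace spanned by the middle components of two composable linear relations. -/
def relSpan (H : Submodule R (U × V)) (L : Submodule R (V × W)) : Submodule R V :=
  H.map (snd R U V) ⊔ L.map (fst R V W)

/-- The middle vectors relating `0` to `0` in the composition of two linear relations. -/
def relKer (H : Submodule R (U × V)) (L : Submodule R (V × W)) : Submodule R V :=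
  H.comap (inr R U V) ⊓ L.comap (inl R V W)

/-- The pairs of elements of two composable linear relations with the same middle component. -/
def relPullback (H : Submodule R (U × V)) (L : Submodule R (V × W)) :
    Submodule R ((U × V) × (V × W)) :=
  H.prod L ⊓ eqLocus (snd R U V ∘ₗ fst R (U × V) (V × W)) (fst R V W ∘ₗ snd R (U × V) (V × W))

theorem mem_relPullback {H : Submodule R (U × V)} {L : Submodule R (V × W)}
    {x : (U × V) × (V × W)} :
    x ∈ relPullback H L ↔ (x.1 ∈ H ∧ x.2 ∈ L) ∧ x.1.2 = x.2.1 :=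
  Iff.rfl

end LinearRelation

section Finrank

variable {K U V W : Type*} [DivisionRing K] [AddCommGroup U] [Module K U] [AddCommGroup V]
  [Module K V] [AddCommGroup W] [Module K W]

theorem finrank_map_add_finrank_inf_ker (f : V →ₗ[K] W) (S : Submodule K V)
    [FiniteDimensional K S] :
    finrank K (S.map f) + finrank K (S ⊓ ker f : Submodule K V) = finrank K S := by
  rw [← range_domRestrict, ← (f.domRestrict S).finrank_range_add_finrank_ker, ker_domRestrict,
    ← Submodule.finrank_map_subtype_eq, Submodule.map_comap_subtype]

theorem finrank_submodule_prod (S : Submodule K U) (T : Submodule K V) [FiniteDimensional K S]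
    [FiniteDimensional K T] :
    finrank K (S.prod T) = finrank K S + finrank K T := by
  rw [← S.range_subtype, ← T.range_subtype, ← range_prodMap, finrank_range_of_inj,
    finrank_prod, S.range_subtype, T.range_subtype]
  exact Prod.map_injective.mpr ⟨S.injective_subtype, T.injective_subtype⟩

variable [FiniteDimensional K U] [FiniteDimensional K V] [FiniteDimensional K W]

theorem finrank_relSpan_add_finrank_relPullback (H : Submodule K (U × V))
    (L : Submodule K (V × W)) :
    finrank K (relSpan H L) + finrank K (relPullback H L) = finrank K H + finrank K L := by
  let diff : (U × V) × (V × W) →ₗ[K] V := (snd K U V).coprod (-fst K V W)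
  have map_diff : (H.prod L).map diff = relSpan H L := by
    simp only [diff, LinearMap.map_coprod_prod, Submodule.map_neg, relSpan]
  have inf_ker_diff : H.prod L ⊓ ker diff = relPullback H L := by
    ext x
    simp [diff, mem_relPullback, ← sub_eq_add_neg, sub_eq_zero]
  rw [← map_diff, ← inf_ker_diff, finrank_map_add_finrank_inf_ker, finrank_submodule_prod]

theorem finrank_relComp_add_finrank_relKer (H : Submodule K (U × V)) (L : Submodule K (V × W)) :
    finrank K (relComp H L) + finrank K (relKer H L) = finrank K (relPullback H L) := by
  let outer : (U × V) × (V × W) →ₗ[K] U × W := (fst K U V).prodMap (snd K V W)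
  let diag : V →ₗ[K] (U × V) × (V × W) := (inr K U V).prod (inl K V W)
  have map_outer : (relPullback H L).map outer = relComp H L := by
    ext ⟨u, w⟩
    constructor
    · rintro ⟨x, hx, ⟨rfl, rfl⟩⟩
      obtain ⟨⟨hH, hL⟩, hmid⟩ := mem_relPullback.mp hx
      exact ⟨x.1.2, hH, hmid ▸ hL⟩
    · rintro ⟨v, hH, hL⟩
      exact ⟨((u, v), (v, w)), ⟨⟨hH, hL⟩, rfl⟩, rfl⟩
  have map_diag : (relKer H L).map diag = relPullback H L ⊓ ker outer := by
    ext ⟨⟨u, v⟩, ⟨v', w⟩⟩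
    constructor
    · rintro ⟨v, ⟨hH, hL⟩, ⟨rfl, rfl⟩⟩
      exact ⟨⟨⟨hH, hL⟩, rfl⟩, rfl⟩
    · rintro ⟨⟨⟨hH, hL⟩, hmid⟩, hx⟩
      obtain rfl : v = v' := hmid
      obtain ⟨rfl, rfl⟩ := Prod.mk.inj hx
      exact ⟨v, ⟨hH, hL⟩, rfl⟩
  have diag_injective : Function.Injective diag := fun v w h => congrArg (fun x => x.1.2) h
  rw [(Submodule.equivMapOfInjective diag diag_injective _).finrank_eq, map_diag, ← map_outer,
    finrank_map_add_finrank_inf_ker]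

end Finrank

section OrthoSum

variable {R U V W : Type*} [CommRing R] [AddCommGroup U] [Module R U] [AddCommGroup V] [Module R V]
  [AddCommGroup W] [Module R W]

/-- The orthogonal direct sum of two bilinear forms, as a form on the product space. -/
def orthoSum (β : BilinForm R U) (γ : BilinForm R V) : BilinForm R (U × V) :=
  β.comp (fst R U V) (fst R U V) + γ.comp (snd R U V) (snd R U V)

@[simp]
theorem orthoSum_apply (β : BilinForm R U) (γ : BilinForm R V) (x y : U × V) :
    orthoSum β γ x y = β x.1 y.1 + γ x.2 y.2 :=
  rfl

theorem le_orthogonal_orthoSum_neg_iff {β : BilinForm R U} {γ : BilinForm R V}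
    {H : Submodule R (U × V)} :
    H ≤ (orthoSum β (-γ)).orthogonal H ↔ ∀ x ∈ H, ∀ y ∈ H, β x.1 y.1 = γ x.2 y.2 := by
  have ortho_iff (x y : U × V) : orthoSum β (-γ) x y = 0 ↔ β x.1 y.1 = γ x.2 y.2 := by
    rw [orthoSum_apply, LinearMap.neg_apply, LinearMap.neg_apply, ← sub_eq_add_neg, sub_eq_zero]
  exact ⟨fun h x hx y hy => (ortho_iff x y).mp (h hy x hx),
    fun h y hy x hx => (ortho_iff x y).mpr (h x hx y hy)⟩

theorem relComp_le_orthogonal_orthoSum_neg {β : BilinForm R U} {γ : BilinForm R V}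
    {δ : BilinForm R W} {H : Submodule R (U × V)} {L : Submodule R (V × W)}
    (hH : H ≤ (orthoSum β (-γ)).orthogonal H) (hL : L ≤ (orthoSum γ (-δ)).orthogonal L) :
    relComp H L ≤ (orthoSum β (-δ)).orthogonal (relComp H L) := by
  rw [le_orthogonal_orthoSum_neg_iff] at *
  rintro x ⟨v, hxH, hxL⟩ y ⟨w, hyH, hyL⟩
  exact (hH _ hxH _ hyH).trans (hL _ hxL _ hyL)

theorem relKer_le_orthogonal_relSpan {β : BilinForm R U} {γ : BilinForm R V}
    {δ : BilinForm R W} {H : Submodule R (U × V)} {L : Submodule R (V × W)}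
    (hH : H ≤ (orthoSum β (-γ)).orthogonal H) (hL : L ≤ (orthoSum γ (-δ)).orthogonal L) :
    relKer H L ≤ γ.orthogonal (relSpan H L) ⊓ γ.flip.orthogonal (relSpan H L) := by
  rw [le_orthogonal_orthoSum_neg_iff] at hH hL
  rintro v ⟨hvH, hvL⟩
  refine ⟨fun x hx => ?_, fun x hx => ?_⟩ <;>
    obtain ⟨_, ⟨y, hy, rfl⟩, _, ⟨z, hz, rfl⟩, rfl⟩ := Submodule.mem_sup.mp hx
  · have hyv : γ y.2 v = 0 := by simpa using (hH y hy _ hvH).symm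
    have hzv : γ z.1 v = 0 := by simpa using hL z hz _ hvL
    simp [hyv, hzv]
  · have hvy : γ v y.2 = 0 := by simpa using (hH _ hvH y hy).symm
    have hvz : γ v z.1 = 0 := by simpa using hL _ hvL z hz
    simp [hvy, hvz]

end OrthoSum

section Metabolic

variable {K U V W : Type*} [Field K] [AddCommGroup U] [Module K U] [AddCommGroup V] [Module K V]
  [AddCommGroup W] [Module K W]

/-- A bilinear form is *metabolic* if it vanishes on a subspace of at least half the dimension.
Neither symmetry nor nondegeneracy of the form is required. The space is
meant to be finite-dimensional: `finrank` is `0` otherwise and every form would qualify. -/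
def IsMetabolic (β : BilinForm K V) : Prop :=
  ∃ L : Submodule K V, L ≤ β.orthogonal L ∧ finrank K V ≤ 2 * finrank K L

theorem IsMetabolic.congr {β : BilinForm K V} (h : IsMetabolic β) (e : V ≃ₗ[K] W) :
    IsMetabolic (BilinForm.congr e β) := by
  obtain ⟨L, hL, hdim⟩ := h
  refine ⟨L.map (e : V →ₗ[K] W), ?_, ?_⟩
  · rintro _ ⟨y, hy, rfl⟩ _ ⟨x, hx, rfl⟩
    simpa using hL hy x hx
  · rwa [LinearEquiv.finrank_map_eq, ← e.finrank_eq]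

theorem isMetabolic_congr_iff {β : BilinForm K V} (e : V ≃ₗ[K] W) :
    IsMetabolic (BilinForm.congr e β) ↔ IsMetabolic β :=
  ⟨fun h => by simpa [← BilinForm.congr_symm] using h.congr e.symm, fun h => h.congr e⟩

theorem finrank_relSpan_add_finrank_relKer_le [FiniteDimensional K V] {β : BilinForm K U}
    {γ : BilinForm K V} {δ : BilinForm K W} {H : Submodule K (U × V)} {L : Submodule K (V × W)}
    {a b : K} (hγ : (a • γ + b • γ.flip).Nondegenerate)
    (hH : H ≤ (orthoSum β (-γ)).orthogonal H) (hL : L ≤ (orthoSum γ (-δ)).orthogonal L) :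
    finrank K (relSpan H L) + finrank K (relKer H L) ≤ finrank K V := by
  have hle : relKer H L ≤ (a • γ + b • γ.flip).orthogonal (relSpan H L) := by
    intro v hv x hx
    obtain ⟨hright, hleft⟩ := relKer_le_orthogonal_relSpan hH hL hv
    have hxv : γ x v = 0 := hright x hx
    have hvx : γ v x = 0 := hleft x hx
    simp [hxv, hvx]
  have hker := Submodule.finrank_mono hle
  have hspan := (relSpan H L).finrank_le
  rw [BilinForm.finrank_orthogonal hγ] at hker
  lia

theorem IsMetabolic.orthoSum_neg_trans [FiniteDimensional K U] [FiniteDimensional K V]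
    [FiniteDimensional K W] {β : BilinForm K U} {γ : BilinForm K V} {δ : BilinForm K W} {a b : K}
    (hβγ : IsMetabolic (orthoSum β (-γ))) (hγ : (a • γ + b • γ.flip).Nondegenerate)
    (hγδ : IsMetabolic (orthoSum γ (-δ))) : IsMetabolic (orthoSum β (-δ)) := by
  obtain ⟨H, hH, hHdim⟩ := hβγ
  obtain ⟨L, hL, hLdim⟩ := hγδ
  refine ⟨relComp H L, relComp_le_orthogonal_orthoSum_neg hH hL, ?_⟩
  have hspan := finrank_relSpan_add_finrank_relPullback H L
  have hcomp := finrank_relComp_add_finrank_relKer H L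
  have hmid := finrank_relSpan_add_finrank_relKer_le hγ hH hL
  rw [finrank_prod] at *
  lia

theorem exists_basis_forall_lt_finrank_mem [FiniteDimensional K V] {n : ℕ}
    (hn : finrank K V = n) (L : Submodule K V) :
    ∃ b : Basis (Fin n) K V, ∀ i : Fin n, (i : ℕ) < finrank K L → b i ∈ L := by
  have hdim : finrank K L + finrank K (V ⧸ L) = n := by
    rw [add_comm, L.finrank_quotient_add_finrank, hn]
  let e : Fin (finrank K L) ⊕ Fin (finrank K (V ⧸ L)) ≃ Fin n :=
    finSumFinEquiv.trans (finCongr hdim)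
  refine ⟨((finBasis K L).sumQuot (finBasis K (V ⧸ L))).reindex e, fun i hi => ?_⟩
  have hei : e.symm i = Sum.inl ⟨i, hi⟩ := by
    rw [Equiv.symm_apply_eq]
    rfl
  rw [Basis.reindex_apply, hei, Basis.sumQuot_inl]
  exact SetLike.coe_mem _

end Metabolic

section Matrix

variable {R K : Type*} [CommRing R] [Field K]

theorem isNullCobordant_iff_exists_basis {n : ℕ} {A : Matrix (Fin n) (Fin n) R} :
    A.IsNullCobordant ↔ ∃ r : ℕ, n = 2 * r ∧ ∃ b : Basis (Fin n) R (Fin n → R),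
      ∀ i j : Fin n, (i : ℕ) < r → (j : ℕ) < r → A.toBilin' (b i) (b j) = 0 := by
  have apply_eq (b : Basis (Fin n) R (Fin n → R)) (i j : Fin n) :
      (((Pi.basisFun R (Fin n)).toMatrix b)ᵀ * A * (Pi.basisFun R (Fin n)).toMatrix b) i j =
        A.toBilin' (b i) (b j) := by
    rw [← LinearMap.BilinForm.toMatrix_apply,
      ← LinearMap.BilinForm.toMatrix_mul_basis_toMatrix (Pi.basisFun R (Fin n)),
      LinearMap.BilinForm.toMatrix_basisFun, LinearMap.BilinForm.toMatrix'_toBilin']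
  constructor
  · rintro ⟨r, hn, P, hP, hA⟩
    have hcol : (Pi.basisFun R (Fin n)).toMatrix P.col = P := rfl
    obtain ⟨hli, hspan⟩ := (Basis.is_basis_iff_det (Pi.basisFun R (Fin n)) (v := P.col)).mpr <| by
      rwa [Basis.det_apply, hcol]
    refine ⟨r, hn, Basis.mk hli hspan.ge, fun i j hi hj => ?_⟩
    rw [← apply_eq, Basis.coe_mk, hcol, hA i j hi hj]
  · rintro ⟨r, hn, b, hb⟩
    refine ⟨r, hn, (Pi.basisFun R (Fin n)).toMatrix b, ?_, fun i j hi hj => ?_⟩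
    · exact (Pi.basisFun R (Fin n)).isUnit_det b
    · rw [apply_eq, hb i j hi hj]

theorem toBilin'_transpose {ι : Type*} [Fintype ι] [DecidableEq ι]
    (M : Matrix ι ι R) : Mᵀ.toBilin' = M.toBilin'.flip := by
  refine LinearMap.ext₂ fun x y => ?_
  rw [BilinForm.flip_apply, Matrix.toBilin'_apply', Matrix.toBilin'_apply', Matrix.mulVec_transpose,
    Matrix.dotProduct_mulVec, dotProduct_comm]

theorem toBilin'_blockSum {p q : ℕ} (A : Matrix (Fin p) (Fin p) R)
    (B : Matrix (Fin q) (Fin q) R) :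
    (A.blockSum B).toBilin' = BilinForm.congr (LinearEquiv.funCongrLeft R R finSumFinEquiv ≪≫ₗ
      LinearEquiv.sumArrowLequivProdArrow (Fin p) (Fin q) R R).symm
      (orthoSum A.toBilin' B.toBilin') := by
  refine LinearMap.ext₂ fun x y => ?_
  rw [BilinForm.congr_apply, orthoSum_apply, Matrix.toBilin'_apply', Matrix.toBilin'_apply',
    Matrix.toBilin'_apply', Matrix.blockSum, Matrix.reindex_apply, Matrix.submatrix_mulVec_equiv,
    dotProduct_comp_equiv_symm, dotProduct_block, Matrix.fromBlocks_mulVec]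
  simp only [Equiv.symm_symm, Sum.elim_comp_inl, Sum.elim_comp_inr, Matrix.zero_mulVec, add_zero,
    zero_add]
  rfl

theorem isNullCobordant_iff_isMetabolic {n : ℕ} {A : Matrix (Fin n) (Fin n) K} :
    A.IsNullCobordant ↔ Even n ∧ IsMetabolic A.toBilin' := by
  rw [isNullCobordant_iff_exists_basis]
  constructor
  · rintro ⟨r, rfl, b, hb⟩
    let v : Fin r → Fin (2 * r) → K := b ∘ Fin.castLE (by lia)
    have hv : LinearIndependent K v := b.linearIndependent.comp _ (Fin.castLE_injective _)
    refine ⟨even_two_mul r, Submodule.span K (Set.range v), ?_, ?_⟩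
    · rw [Submodule.span_le]
      rintro _ ⟨j, rfl⟩
      have hspan : Submodule.span K (Set.range v) ≤ ker (A.toBilin'.flip (v j)) := by
        rw [Submodule.span_le]
        rintro _ ⟨i, rfl⟩
        exact hb _ _ i.isLt j.isLt
      exact fun x hx => hspan hx
    · rw [finrank_fin_fun, finrank_span_eq_card hv, Fintype.card_fin]
  · rintro ⟨hn, L, hL, hdim⟩
    rw [finrank_fin_fun] at hdim
    obtain ⟨r, rfl⟩ := even_iff_exists_two_mul.mp hn
    obtain ⟨b, hb⟩ := exists_basis_forall_lt_finrank_mem (finrank_fin_fun K) L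
    refine ⟨r, rfl, b, fun i j hi hj => ?_⟩
    exact hL (hb j (by lia)) _ (hb i (by lia))

theorem isNullCobordant_blockSum_neg_iff {p q : ℕ} {A : Matrix (Fin p) (Fin p) K}
    {B : Matrix (Fin q) (Fin q) K} :
    (A.blockSum (-B)).IsNullCobordant ↔
      Even (p + q) ∧ IsMetabolic (orthoSum A.toBilin' (-B.toBilin')) := by
  rw [isNullCobordant_iff_isMetabolic, toBilin'_blockSum, isMetabolic_congr_iff, map_neg]

end Matrix

theorem rat_cobordant_trans_general {K : Type*} [Field K] (lam mu : K) {p q s : ℕ}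
    (A : Matrix (Fin p) (Fin p) K) (B : Matrix (Fin q) (Fin q) K) (C : Matrix (Fin s) (Fin s) K)
    (hB : (lam • B + mu • Bᵀ).det ≠ 0)
    (hAB : (A.blockSum (-B)).IsNullCobordant)
    (hBC : (B.blockSum (-C)).IsNullCobordant) :
    (A.blockSum (-C)).IsNullCobordant := by
  obtain ⟨hpq, hAB⟩ := isNullCobordant_blockSum_neg_iff.mp hAB
  obtain ⟨hqs, hBC⟩ := isNullCobordant_blockSum_neg_iff.mp hBC
  have hform : (lam • B.toBilin' + mu • B.toBilin'.flip).Nondegenerate := by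
    rw [← toBilin'_transpose, ← map_smul, ← map_smul, ← map_add]
    exact BilinForm.nondegenerate_toBilin'_of_det_ne_zero' _ hB
  have hps : Even (p + s) :=
    Nat.even_add.mpr ((Nat.even_add.mp hpq).trans (Nat.even_add.mp hqs))
  exact isNullCobordant_blockSum_neg_iff.mpr ⟨hps, hAB.orthoSum_neg_trans hform hBC⟩

/-- Transitivity of rational cobordism for square rational matrices `A`, `B`, `C` with
`det (λB + μBᵀ) ≠ 0`: if `A ⊞ (−B)` and `B ⊞ (−C)` are rationally null-cobordant, then so
is `A ⊞ (−C)`. -/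
theorem rat_cobordant_trans (lam mu : ℚ) (p q s : ℕ)
    (hpq : Even (p + q)) (hqs : Even (q + s))
    (A : Matrix (Fin p) (Fin p) ℚ) (B : Matrix (Fin q) (Fin q) ℚ)
    (C : Matrix (Fin s) (Fin s) ℚ)
    (hB : (lam • B + mu • Bᵀ).det ≠ 0)
    (hAB : (A.blockSum (-B)).IsNullCobordant)
    (hBC : (B.blockSum (-C)).IsNullCobordant) :
    (A.blockSum (-C)).IsNullCobordant :=
  rat_cobordant_trans_general lam mu A B C hB hAB hBC
end

section
/- Let M be a k×k rational matrix, η a k×1 rational column vector, ξ a 1×k rational row vector, and x, x', y ∈ ℚ. Let M' be the (k+2)×(k+2) rational matrix given in block form (with respect to the decomposition k+2 = k+1+1) by M' = [[M, 0, η],[0, 0, x],[ξ, x', y]], where the 0's denote the zero column, zero row, and zero entry of the appropriate sizes. Then the block sum (−M) ⊞ M' is rationally null-cobordant; that is, M and M' are rationally cobordant. -/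
open Matrix

/-! Let the form `-M ⊞ M'` act on `V ⊕ (V ⊕ W)`, where `M'` restricts to `M` on `V`. The forms
`-M` and `M` cancel on the graph `{(v, v, 0)}` of the inclusion `V → V ⊕ W`, so the graph is
isotropic. If half of a basis of `W` spans a subspace `U` that is isotropic and orthogonal to `V`
on both sides for `M'`, then the sum of the graph and `U` is isotropic of half the total dimension.
For an enlargement, `U` is the line spanned by the basis vector whose row and column in `M'` have
`x` and `x'` as their only possibly nonzero entries. -/

variable {R : Type*} [CommRing R]

lemma isNullCobordant_reindex_of_transpose_mul_mul {ι σ : Type*} [Fintype ι] [DecidableEq ι]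
    {n : ℕ} (e : ι ≃ Fin n) (f : σ ⊕ σ ≃ ι) {A P : Matrix ι ι R}
    (hP : IsUnit P.det)
    (hA : ∀ s t, (Pᵀ * A * P) (f (Sum.inl s)) (f (Sum.inl t)) = 0) :
    (reindex e e A).IsNullCobordant := by
  have : Fintype σ := Fintype.ofInjective (f ∘ Sum.inl) (f.injective.comp Sum.inl_injective)
  have hn : Fintype.card σ + Fintype.card σ = n := by
    simpa using Fintype.card_congr (f.trans e)
  let g : σ ⊕ σ ≃ Fin n :=
    ((Fintype.equivFin σ).sumCongr (Fintype.equivFin σ)).trans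
      (finSumFinEquiv.trans (finCongr hn))
  have exists_inl (i : Fin n) (hi : (i : ℕ) < Fintype.card σ) :
      ∃ s, g.symm i = Sum.inl s := by
    refine ⟨(Fintype.equivFin σ).symm ⟨i, hi⟩, ?_⟩
    rw [Equiv.symm_apply_eq]
    ext
    simp [g]
  refine ⟨Fintype.card σ, by lia, P.submatrix e.symm (g.symm.trans f), ?_, fun i j hi hj ↦ ?_⟩
  · rwa [← isUnit_iff_isUnit_det, isUnit_submatrix_equiv, isUnit_iff_isUnit_det]
  · obtain ⟨s, hs⟩ := exists_inl i hi
    obtain ⟨t, ht⟩ := exists_inl j hj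
    rw [transpose_submatrix, reindex_apply, submatrix_mul_equiv, submatrix_mul_equiv]
    simpa [hs, ht] using hA s t

lemma blockSum_reindex_right {ι : Type*} {p q : ℕ} (A : Matrix (Fin p) (Fin p) R)
    (B : Matrix ι ι R) (e : ι ≃ Fin q) :
    A.blockSum (reindex e e B) =
      reindex (((Equiv.refl _).sumCongr e).trans finSumFinEquiv)
        (((Equiv.refl _).sumCongr e).trans finSumFinEquiv) (fromBlocks A 0 0 B) := by
  ext i j
  simp only [blockSum, reindex_apply, submatrix_apply, Equiv.symm_trans_apply]
  rcases finSumFinEquiv.symm i with a | a <;> rcases finSumFinEquiv.symm j with b | b <;> simp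

section GraphShear

variable {κ ν : Type*} [DecidableEq κ] [DecidableEq ν]

variable (R κ ν) in
/-- The change of basis of `R^κ ⊕ (R^κ ⊕ R^ν)` that replaces the first summand by the graph of
the inclusion `R^κ → R^κ ⊕ R^ν` and fixes the other basis vectors. On the graph, the forms `-M`
and `M` cancel. -/
def graphShear : Matrix (κ ⊕ (κ ⊕ ν)) (κ ⊕ (κ ⊕ ν)) R :=
  fromBlocks 1 0 (fromRows 1 0) 1

variable [Fintype κ] [Fintype ν]

lemma det_graphShear : (graphShear R κ ν).det = 1 := by
  simp [graphShear]

lemma graphShear_transpose_mul_mul (M : Matrix κ κ R) (B : Matrix κ ν R) (C : Matrix ν κ R)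
    (D : Matrix ν ν R) :
    (graphShear R κ ν)ᵀ * fromBlocks (-M) 0 0 (fromBlocks M B C D) * graphShear R κ ν =
      fromBlocks 0 (fromCols M B) (fromRows M C) (fromBlocks M B C D) := by
  simp [graphShear, fromBlocks_transpose, transpose_fromRows, fromBlocks_multiply,
    fromBlocks_mul_fromRows, fromCols_mul_fromBlocks, fromCols_mul_fromRows]

end GraphShear

theorem enlargement_cobordant_general {μ ν : Type*} {k n : ℕ}
    (e : Fin k ⊕ ν ≃ Fin n) (f : μ ⊕ μ ≃ ν) (M : Matrix (Fin k) (Fin k) R)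
    {B : Matrix (Fin k) ν R} {C : Matrix ν (Fin k) R} {D : Matrix ν ν R}
    (hB : ∀ i a, B i (f (Sum.inl a)) = 0) (hC : ∀ a j, C (f (Sum.inl a)) j = 0)
    (hD : ∀ a b, D (f (Sum.inl a)) (f (Sum.inl b)) = 0) :
    ((-M).blockSum (reindex e e (fromBlocks M B C D))).IsNullCobordant := by
  classical
  have : Fintype ν := Fintype.ofInjective (e ∘ Sum.inr) (e.injective.comp Sum.inr_injective)
  -- The isotropic half is spanned by the graph and the vectors `f (Sum.inl a)`.
  let g : (Fin k ⊕ μ) ⊕ (Fin k ⊕ μ) ≃ Fin k ⊕ (Fin k ⊕ ν) :=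
    ((Equiv.sumSumSumComm _ _ _ _).trans ((Equiv.refl _).sumCongr f)).trans
      (Equiv.sumAssoc _ _ _)
  rw [blockSum_reindex_right]
  refine isNullCobordant_reindex_of_transpose_mul_mul _ g (P := graphShear R (Fin k) ν)
    (by simp [det_graphShear]) ?_
  rw [graphShear_transpose_mul_mul]
  rintro (i | a) (j | b) <;> simp [g, hB, hC, hD]

/-- An enlargement `M' = [[M,0,η],[0,0,x],[ξ,x',y]]` (blocks of sizes `k + 1 + 1`) of a
square rational matrix `M` is rationally cobordant to `M`: the block sum `(−M) ⊞ M'`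
is rationally null-cobordant. -/
theorem enlargement_cobordant (k : ℕ) (M : Matrix (Fin k) (Fin k) ℚ)
    (η ξ : Fin k → ℚ) (x x' y : ℚ) :
    ((-M).blockSum
      (Matrix.reindex finSumFinEquiv finSumFinEquiv
        (Matrix.fromBlocks M
          (Matrix.of fun i (j : Fin 2) => if j = 0 then 0 else η i)
          (Matrix.of fun (i : Fin 2) j => if i = 0 then 0 else ξ j)
          !![0, x; x', y]))).IsNullCobordant :=
  enlargement_cobordant_general (μ := Unit) finSumFinEquiv
    (Equiv.boolEquivPUnitSumPUnit.symm.trans finTwoEquiv.symm) M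
    (fun _ _ ↦ rfl) (fun _ _ ↦ rfl) (fun _ _ ↦ rfl)
end
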